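/- Let β ∈ (0,1). The derivative at 0 of the return map F_β equals F_β′(0) = (1+β)(1+2β)/((2−β)(2+β)) = (2β²+3β+1)/(4−β²), and this quantity satisfies the trichotomy: F_β′(0) < 1 if and only if β < σ; F_β′(0) = 1 if and only if β = σ; and F_β′(0) > 1 if and only if β > σ. -/

import Mathlib

/-- The one-dimensional return map on the indifference set J of the Shapley
family. -/
noncomputable def retMap (β X : ℝ) : ℝ :=
  X*(1 + β)*(1 + 2*β)*(1 - β + β^2)
    / ((2 - β)*(3*(1 + β)^2*X + (2 + β)*(1 - β + β^2)))

/-- for β ∈ (0,1), F_β′(0) = (1+β)(1+2β)/((2−β)(2+β))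
= (2β²+3β+1)/(4−β²), and this quantity is <1, =1, >1 according as β is
less than, equal to, or greater than the golden mean σ = (√5−1)/2. -/
theorem stmt15 (β : ℝ) (hβ : β ∈ Set.Ioo (0 : ℝ) 1) :
    HasDerivAt (retMap β) ((2*β^2 + 3*β + 1)/(4 - β^2)) 0 ∧
    (1 + β)*(1 + 2*β)/((2 - β)*(2 + β)) = (2*β^2 + 3*β + 1)/(4 - β^2) ∧
    ((2*β^2 + 3*β + 1)/(4 - β^2) < 1 ↔ β < (Real.sqrt 5 - 1)/2) ∧
    ((2*β^2 + 3*β + 1)/(4 - β^2) = 1 ↔ β = (Real.sqrt 5 - 1)/2) ∧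
    (1 < (2*β^2 + 3*β + 1)/(4 - β^2) ↔ (Real.sqrt 5 - 1)/2 < β) := by
  obtain ⟨h0, h1⟩ := hβ
  have hden : 0 < 4 - β ^ 2 := by nlinarith
  have hfactor : 2 * β ^ 2 + 3 * β + 1 - (4 - β ^ 2)
      = 3 * (β + (Real.sqrt 5 + 1) / 2) * (β - (Real.sqrt 5 - 1) / 2) := by
    have h5 : Real.sqrt 5 ^ 2 = 5 := Real.sq_sqrt (by norm_num)
    linear_combination (3 / 4) * h5
  have hpos : 0 < 3 * (β + (Real.sqrt 5 + 1) / 2) := by positivity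
  have hlt : (2 * β ^ 2 + 3 * β + 1) / (4 - β ^ 2) < 1 ↔ β < (Real.sqrt 5 - 1) / 2 := by
    rw [div_lt_one hden, ← sub_neg, hfactor, ← neg_pos, ← mul_neg, mul_pos_iff_of_pos_left hpos,
      neg_pos, sub_neg]
  have hgt : 1 < (2 * β ^ 2 + 3 * β + 1) / (4 - β ^ 2) ↔ (Real.sqrt 5 - 1) / 2 < β := by
    rw [one_lt_div hden, ← sub_pos, hfactor, mul_pos_iff_of_pos_left hpos, sub_pos]
  have heq : (2 * β ^ 2 + 3 * β + 1) / (4 - β ^ 2) = 1 ↔ β = (Real.sqrt 5 - 1) / 2 := by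
    rw [div_eq_one_iff_eq hden.ne', ← sub_eq_zero, hfactor, mul_eq_zero_iff_left hpos.ne',
      sub_eq_zero]
  refine ⟨?_, by congr 1 <;> ring, hlt, heq, hgt⟩
  have h2 : 2 - β ≠ 0 := by linarith
  have h3 : 2 + β ≠ 0 := by positivity
  have h4 : 1 - β + β ^ 2 ≠ 0 := by nlinarith
  have hnum : HasDerivAt (fun X : ℝ => X * (1 + β) * (1 + 2 * β) * (1 - β + β ^ 2))
      (1 * (1 + β) * (1 + 2 * β) * (1 - β + β ^ 2)) 0 :=
    (((hasDerivAt_id (0 : ℝ)).mul_const _).mul_const _).mul_const _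
  have hdenom : HasDerivAt
      (fun X : ℝ => (2 - β) * (3 * (1 + β) ^ 2 * X + (2 + β) * (1 - β + β ^ 2)))
      ((2 - β) * (3 * (1 + β) ^ 2 * 1)) 0 :=
    (((hasDerivAt_id (0 : ℝ)).const_mul _).add_const _).const_mul _
  have hne : (2 - β) * (3 * (1 + β) ^ 2 * 0 + (2 + β) * (1 - β + β ^ 2)) ≠ 0 := by
    rw [mul_zero, zero_add]
    exact mul_ne_zero h2 (mul_ne_zero h3 h4)
  refine (hnum.div hdenom hne).congr_deriv ?_
  rw [show 4 - β ^ 2 = (2 - β) * (2 + β) by ring]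
  simp only [mul_zero, zero_mul, zero_add, sub_zero]
  field_simp
  ring
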